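/- Let 𝒳 ⊆ L⁰ be an arbitrary set of (a.e.-classes of) real-valued measurable functions, and for each n ∈ ℕ define Oₙ := sc{(|X| − n)₊ : X ∈ 𝒳}. Then ⋂ₙ Oₙ = {0} (the only Y ∈ L⁰₊ belonging to every Oₙ is Y = 0 a.e.) if and only if there exists a probability measure Q ~ P such that 𝒳 is uniformly Q-integrable. -/

import Mathlib

open MeasureTheory Filter Topology

/-- `L⁰₊`: (representatives of) measurable functions that are nonnegative `P`-a.s. -/
def L0pos {Ω : Type*} [MeasurableSpace Ω] (P : Measure Ω) : Set (Ω → ℝ) :=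
  {X | Measurable X ∧ ∀ᵐ ω ∂P, 0 ≤ X ω}

/-- `sc S`: the solid hull of the convex hull of `S`. -/
def scSet {Ω : Type*} [MeasurableSpace Ω] (P : Measure Ω) (S : Set (Ω → ℝ)) :
    Set (Ω → ℝ) :=
  {Y | Y ∈ L0pos P ∧ ∃ Z ∈ convexHull ℝ S, ∀ᵐ ω ∂P, Y ω ≤ Z ω}

/-- `Oₙ = sc {(|X| - n)₊ : X ∈ 𝒳}` for `𝒳 ⊆ L⁰`. -/
def OsetAbs {Ω : Type*} [MeasurableSpace Ω] (P : Measure Ω) (𝒳 : Set (Ω → ℝ)) (n : ℕ) :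
    Set (Ω → ℝ) :=
  scSet P {f | ∃ X ∈ 𝒳, f = fun ω => max (|X ω| - n) 0}

/-- `𝒳 ⊆ L⁰` is uniformly `Q`-integrable: `sup_{X ∈ 𝒳} E_Q[|X| 1_{|X| > n}] → 0`. -/
def UnifIntAbs {Ω : Type*} [MeasurableSpace Ω] (Q : Measure Ω) (𝒳 : Set (Ω → ℝ)) : Prop :=
  Tendsto (fun n : ℕ => ⨆ X ∈ 𝒳, ∫⁻ ω in {ω | (n : ℝ) < |X ω|}, ENNReal.ofReal (|X ω|) ∂Q)
    atTop (𝓝 0)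

/-!
The forward implication rests on a Hilbert space argument. Let `Sₙ` be the convex hull of the
excesses `(|X| - n)₊`. The functions `u` with `(1 + f)⁻¹ ≤ u ≤ 1` for some `f ∈ Sₙ` form a bounded
convex subset of `L²(P)`, whose closure has a point `uₙ` of least norm. Moving from `uₙ` towards
`f ∈ Sₙ` in the variational inequality gives `E[uₙ³ f] ≤ E[1 - uₙ]`. The closures decrease with `n`,
so `(uₙ)` is Cauchy; its limit lies in every closure and is therefore `1`, because `⋂ₙ Oₙ = {0}`.
As `Sₙ` and `Sₘ` differ only by a bounded shift, `{uₙ > 0}` has probability at least `‖uₘ‖²` for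
every `m`, so `uₙ > 0`. Along a subsequence `uₙ → 1` almost everywhere, hence the infimum of the
`uₙ³` along it is positive, and it is proportional to the density of a measure `Q` for which
`sup_{f ∈ Sₙ} E_Q f → 0`. This is uniform integrability, since
`E_Q (|X| - n)₊ ≤ E_Q[|X| 1_{|X| > n}] ≤ 2 E_Q (|X| - n/2)₊`.
Conversely, `Y ∈ Oₙ` gives `E_Q Y ≤ sup_X E_Q (|X| - n)₊`, which tends to `0`.
-/

section LeastNorm

variable {E : Type*} [NormedAddCommGroup E] [InnerProductSpace ℝ E] {K : Set E} {v w : E}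

/-- `v` is the point of least norm of the convex set `K`, expressed through the variational
inequality `⟪v, w - v⟫ ≥ 0` for all `w ∈ K`. -/
def IsLeastNormPoint (K : Set E) (v : E) : Prop :=
  v ∈ K ∧ ∀ w ∈ K, ‖v‖ ^ 2 ≤ inner ℝ v w

theorem exists_isLeastNormPoint (hconv : Convex ℝ K) (hcomplete : IsComplete K)
    (hne : K.Nonempty) : ∃ v, IsLeastNormPoint K v := by
  obtain ⟨v, hvK, hv⟩ := exists_norm_eq_iInf_of_complete_convex hne hcomplete hconv 0
  refine ⟨v, hvK, fun w hw => ?_⟩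
  have hvar := (norm_eq_iInf_iff_real_inner_le_zero hconv hvK).1 hv w hw
  rw [zero_sub, inner_neg_left, inner_sub_right, real_inner_self_eq_norm_sq] at hvar
  linarith

theorem IsLeastNormPoint.norm_le (hv : IsLeastNormPoint K v) (hw : w ∈ K) : ‖v‖ ≤ ‖w‖ := by
  have hle : ‖v‖ * ‖v‖ ≤ ‖v‖ * ‖w‖ := by
    rw [← sq]
    exact (hv.2 w hw).trans (real_inner_le_norm v w)
  rcases (norm_nonneg v).eq_or_lt with hzero | hpos
  · exact hzero ▸ norm_nonneg w
  · exact le_of_mul_le_mul_left hle hpos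

theorem IsLeastNormPoint.norm_sub_sq_le (hv : IsLeastNormPoint K v) (hw : w ∈ K) :
    ‖w - v‖ ^ 2 ≤ ‖w‖ ^ 2 - ‖v‖ ^ 2 := by
  rw [norm_sub_sq_real, real_inner_comm]
  linarith [hv.2 w hw]

theorem cauchySeq_of_isLeastNormPoint {K : ℕ → Set E} {v : ℕ → E} (hK : Antitone K)
    (hv : ∀ n, IsLeastNormPoint (K n) (v n)) (hbdd : BddAbove (Set.range fun n => ‖v n‖ ^ 2)) :
    CauchySeq v := by
  have hmono : Monotone fun n => ‖v n‖ ^ 2 := fun m n hmn =>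
    pow_le_pow_left₀ (norm_nonneg _) ((hv m).norm_le (hK hmn (hv n).1)) 2
  have hcauchy := (tendsto_atTop_ciSup hmono hbdd).cauchySeq
  rw [Metric.cauchySeq_iff'] at hcauchy ⊢
  intro ε hε
  obtain ⟨N, hN⟩ := hcauchy (ε ^ 2) (by positivity)
  refine ⟨N, fun n hn => ?_⟩
  rw [dist_eq_norm]
  refine lt_of_pow_lt_pow_left₀ 2 hε.le ?_
  calc ‖v n - v N‖ ^ 2 ≤ ‖v n‖ ^ 2 - ‖v N‖ ^ 2 := (hv N).norm_sub_sq_le (hK hn (hv n).1)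
    _ ≤ dist (‖v n‖ ^ 2) (‖v N‖ ^ 2) := le_abs_self _
    _ < ε ^ 2 := hN n hn

end LeastNorm

/-- Every function in `S` exceeds some function in `T` by at most the constant `c`, `P`-a.e. -/
def IsDominatedUpTo {Ω : Type*} [MeasurableSpace Ω] (P : Measure Ω) (c : ℝ)
    (S T : Set (Ω → ℝ)) : Prop :=
  ∀ f ∈ S, ∃ g ∈ T, ∀ᵐ ω ∂P, f ω ≤ c + g ω

section ReciprocalHull

variable {Ω : Type*} [MeasurableSpace Ω] {P : Measure Ω} [IsFiniteMeasure P]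
  {S T : Set (Ω → ℝ)} {f : Ω → ℝ} {u : Lp ℝ 2 P}

variable (P) in
/-- The functions `u` with `(1 + f)⁻¹ ≤ u ≤ 1` for some `f ∈ S`, as a subset of `L²(P)`. When `S` is
a convex set of nonnegative functions this set is convex, and being bounded it gives access to
Hilbert space methods although `S` itself need not contain any integrable function. -/
def reciprocalHull (S : Set (Ω → ℝ)) : Set (Lp ℝ 2 P) :=
  {u | u ∈ Set.Icc 0 (Lp.const 2 P 1) ∧ ∃ f ∈ S, ∀ᵐ ω ∂P, (1 + f ω)⁻¹ ≤ u ω}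

theorem mem_Icc_const_one_iff :
    u ∈ Set.Icc 0 (Lp.const 2 P 1) ↔ ∀ᵐ ω ∂P, u ω ∈ Set.Icc (0 : ℝ) 1 := by
  rw [Set.mem_Icc, ← Lp.coeFn_nonneg, ← Lp.coeFn_le]
  simp only [Set.mem_Icc, eventually_and]
  refine and_congr_right fun _ => eventually_congr ?_
  filter_upwards [Lp.coeFn_const 2 P (1 : ℝ)] with ω hω
  rw [hω, Function.const_apply]

theorem reciprocalHull_subset_Icc : reciprocalHull P S ⊆ Set.Icc 0 (Lp.const 2 P 1) :=
  fun _ hu => hu.1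

theorem ae_mem_Icc_of_mem_closure_reciprocalHull (hu : u ∈ closure (reciprocalHull P S)) :
    ∀ᵐ ω ∂P, u ω ∈ Set.Icc (0 : ℝ) 1 :=
  mem_Icc_const_one_iff.1 (closure_minimal reciprocalHull_subset_Icc isClosed_Icc hu)

theorem const_one_mem_reciprocalHull (hS : S ⊆ L0pos P) (hne : S.Nonempty) :
    Lp.const 2 P (1 : ℝ) ∈ reciprocalHull P S := by
  obtain ⟨f, hf⟩ := hne
  have hconst := Lp.coeFn_const 2 P (1 : ℝ)
  refine ⟨mem_Icc_const_one_iff.2 (hconst.mono fun ω hω => ?_), f, hf, ?_⟩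
  · exact hω ▸ Set.right_mem_Icc.2 zero_le_one
  · filter_upwards [hconst, (hS hf).2] with ω hω hfω
    rw [hω]
    exact inv_le_one_of_one_le₀ (by linarith)

theorem convex_reciprocalHull (hS : S ⊆ L0pos P) (hconv : Convex ℝ S) :
    Convex ℝ (reciprocalHull P S) := by
  rintro u ⟨hu, f, hf, hfu⟩ v ⟨hv, g, hg, hgv⟩ a b ha hb hab
  have hcoe : ∀ᵐ ω ∂P, (a • u + b • v) ω = a * u ω + b * v ω := by
    filter_upwards [Lp.coeFn_add (a • u) (b • v), Lp.coeFn_smul a u, Lp.coeFn_smul b v]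
      with ω hadd hau hbv
    rw [hadd, Pi.add_apply, hau, hbv, Pi.smul_apply, Pi.smul_apply, smul_eq_mul, smul_eq_mul]
  refine ⟨mem_Icc_const_one_iff.2 ?_, a • f + b • g, hconv hf hg ha hb hab, ?_⟩
  · filter_upwards [hcoe, mem_Icc_const_one_iff.1 hu, mem_Icc_const_one_iff.1 hv]
      with ω hcoeω huω hvω
    exact hcoeω ▸ convex_Icc (0 : ℝ) 1 huω hvω ha hb hab
  filter_upwards [hcoe, hfu, hgv, (hS hf).2, (hS hg).2] with ω hcoeω hfuω hgvω hfω hgω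
  have hinv : (a * (1 + f ω) + b * (1 + g ω))⁻¹ ≤ a * (1 + f ω)⁻¹ + b * (1 + g ω)⁻¹ := by
    have hf1 : 0 < 1 + f ω := by linarith
    have hg1 : 0 < 1 + g ω := by linarith
    simpa only [smul_eq_mul, zpow_neg_one] using
      (convexOn_zpow (𝕜 := ℝ) (-1)).2 hf1 hg1 ha hb hab
  rw [hcoeω, Pi.add_apply, Pi.smul_apply, Pi.smul_apply, smul_eq_mul, smul_eq_mul]
  calc (1 + (a * f ω + b * g ω))⁻¹ = (a * (1 + f ω) + b * (1 + g ω))⁻¹ := by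
        rw [mul_add, mul_add, add_add_add_comm, mul_one, mul_one, hab]
    _ ≤ a * (1 + f ω)⁻¹ + b * (1 + g ω)⁻¹ := hinv
    _ ≤ a * u ω + b * v ω := by gcongr

theorem exists_mem_Icc_ae_eq_comp {ψ : Ω → ℝ → ℝ} (hmeas : Measurable (Function.uncurry ψ))
    (hmaps : ∀ᵐ ω ∂P, Set.MapsTo (ψ ω) (Set.Icc 0 1) (Set.Icc 0 1))
    (hu : ∀ᵐ ω ∂P, u ω ∈ Set.Icc (0 : ℝ) 1) :
    ∃ v ∈ Set.Icc 0 (Lp.const 2 P 1), ∀ᵐ ω ∂P, v ω = ψ ω (u ω) := by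
  have hbound : ∀ᵐ ω ∂P, ψ ω (u ω) ∈ Set.Icc 0 1 := by
    filter_upwards [hmaps, hu] with ω hmapsω huω using hmapsω huω
  have hmemLp : MemLp (fun ω => ψ ω (u ω)) 2 P := by
    refine MemLp.of_bound (hmeas.comp_aemeasurable
      (aemeasurable_id.prodMk (Lp.stronglyMeasurable u).aemeasurable)).aestronglyMeasurable 1 ?_
    filter_upwards [hbound] with ω hω
    exact (Real.norm_of_nonneg hω.1).trans_le hω.2
  refine ⟨hmemLp.toLp, mem_Icc_const_one_iff.2 ?_, hmemLp.coeFn_toLp⟩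
  filter_upwards [hmemLp.coeFn_toLp, hbound] with ω hω hboundω using hω ▸ hboundω

theorem exists_mem_closure_reciprocalHull_comp {ψ : Ω → ℝ → ℝ} {c : NNReal}
    (hmeas : Measurable (Function.uncurry ψ))
    (hlip : ∀ᵐ ω ∂P, LipschitzOnWith c (ψ ω) (Set.Icc 0 1))
    (hmaps : ∀ᵐ ω ∂P, Set.MapsTo (ψ ω) (Set.Icc 0 1) (Set.Icc 0 1))
    (hψ : ∀ f ∈ S, ∃ g ∈ T, ∀ᵐ ω ∂P, ∀ x ∈ Set.Icc 0 1,
      (1 + f ω)⁻¹ ≤ x → (1 + g ω)⁻¹ ≤ ψ ω x)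
    (hu : u ∈ closure (reciprocalHull P S)) :
    ∃ v ∈ closure (reciprocalHull P T), ∀ᵐ ω ∂P, v ω = ψ ω (u ω) := by
  have huIcc := ae_mem_Icc_of_mem_closure_reciprocalHull hu
  obtain ⟨v, -, hv⟩ := exists_mem_Icc_ae_eq_comp hmeas hmaps huIcc
  refine ⟨v, Metric.mem_closure_iff.2 fun ε hε => ?_, hv⟩
  obtain ⟨w, hw, huw⟩ := Metric.mem_closure_iff.1 hu (ε / (c + 1)) (by positivity)
  have hwIcc := mem_Icc_const_one_iff.1 hw.1
  obtain ⟨w', hw'Icc, hw'⟩ := exists_mem_Icc_ae_eq_comp hmeas hmaps hwIcc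
  refine ⟨w', ⟨hw'Icc, ?_⟩, ?_⟩
  · obtain ⟨-, f, hf, hfw⟩ := hw
    obtain ⟨g, hg, hfg⟩ := hψ f hf
    refine ⟨g, hg, ?_⟩
    filter_upwards [hfg, hfw, hwIcc, hw'] with ω hfgω hfwω hwω hw'ω
    exact (hfgω _ hwω hfwω).trans_eq hw'ω.symm
  · have hdist : ‖v - w'‖ ≤ c * ‖u - w‖ := by
      refine Lp.norm_le_mul_norm_of_ae_le_mul ?_
      filter_upwards [hlip, huIcc, hwIcc, hv, hw', Lp.coeFn_sub v w', Lp.coeFn_sub u w]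
        with ω hlipω huω hwω hvω hw'ω hsub' hsub
      rw [hsub', hsub, Pi.sub_apply, Pi.sub_apply, hvω, hw'ω]
      exact hlipω.norm_sub_le huω hwω
    rw [dist_eq_norm] at huw ⊢
    calc ‖v - w'‖ ≤ (c + 1) * ‖u - w‖ := hdist.trans (by gcongr; linarith)
      _ < (c + 1) * (ε / (c + 1)) := by gcongr
      _ = ε := mul_div_cancel₀ ε (by positivity)

theorem exists_mem_closure_reciprocalHull_min {c : ℝ} (hc : 0 ≤ c) (hS : S ⊆ L0pos P)
    (hT : T ⊆ L0pos P) (hST : IsDominatedUpTo P c S T) (hu : u ∈ closure (reciprocalHull P S)) :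
    ∃ v ∈ closure (reciprocalHull P T), ∀ᵐ ω ∂P, v ω = min ((1 + c) * u ω) 1 := by
  have hlip : LipschitzWith (Real.toNNReal (1 + c)) fun x => min ((1 + c) * x) 1 := by
    refine LipschitzWith.min_const (LipschitzWith.of_dist_le_mul fun x y => ?_) 1
    rw [Real.coe_toNNReal _ (by positivity), Real.dist_eq, Real.dist_eq, ← mul_sub, abs_mul,
      abs_of_nonneg (by positivity)]
  refine exists_mem_closure_reciprocalHull_comp (ψ := fun _ x => min ((1 + c) * x) 1)
    (by unfold Function.uncurry; fun_prop) (.of_forall fun _ => hlip.lipschitzOnWith)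
    (.of_forall fun _ x hx => ⟨?_, min_le_right _ _⟩) (fun f hf => ?_) hu
  · exact le_min (mul_nonneg (by positivity) hx.1) zero_le_one
  · obtain ⟨g, hg, hfg⟩ := hST f hf
    refine ⟨g, hg, ?_⟩
    filter_upwards [hfg, (hS hf).2, (hT hg).2] with ω hfgω hfω hgω x _ hfx
    refine le_min ?_ (inv_le_one_of_one_le₀ (by linarith))
    calc (1 + g ω)⁻¹ ≤ (1 + c) * (1 + f ω)⁻¹ := by
          rw [inv_eq_one_div, ← div_eq_mul_inv, div_le_div_iff₀ (by positivity) (by positivity)]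
          nlinarith
      _ ≤ (1 + c) * x := by gcongr

theorem closure_reciprocalHull_subset (hS : S ⊆ L0pos P) (hT : T ⊆ L0pos P)
    (hST : IsDominatedUpTo P 0 S T) :
    closure (reciprocalHull P S) ⊆ closure (reciprocalHull P T) := by
  intro u hu
  obtain ⟨v, hv, hvu⟩ := exists_mem_closure_reciprocalHull_min le_rfl hS hT hST hu
  have huv : u = v := by
    refine Lp.ext ?_
    filter_upwards [hvu, ae_mem_Icc_of_mem_closure_reciprocalHull hu] with ω hvω huω
    rw [hvω, add_zero, one_mul, min_eq_left huω.2]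
  exact huv ▸ hv

end ReciprocalHull

section Numeraire

variable {Ω : Type*} [MeasurableSpace Ω] {P : Measure Ω} [IsFiniteMeasure P]
  {S : Set (Ω → ℝ)} {f : Ω → ℝ} {u : Lp ℝ 2 P} {t : ℝ}

theorem inner_eq_integral_mul {μ : Measure Ω} (v w : Lp ℝ 2 μ) :
    inner ℝ v w = ∫ ω, v ω * w ω ∂μ := by
  simp only [L2.inner_def, RCLike.inner_apply, conj_trivial, mul_comm]

theorem lipschitzOnWith_div_add_mul {s b : ℝ} (hs : 0 < s) (hb : 0 ≤ b) :
    LipschitzOnWith (Real.toNNReal s⁻¹) (fun x => x / (s + b * x)) (Set.Ici 0) := by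
  refine LipschitzOnWith.of_dist_le_mul fun x hx y hy => ?_
  rw [Real.coe_toNNReal _ (inv_nonneg.2 hs.le), Real.dist_eq, Real.dist_eq]
  have hxs : s ≤ s + b * x := le_add_of_nonneg_right (mul_nonneg hb hx)
  have hys : s ≤ s + b * y := le_add_of_nonneg_right (mul_nonneg hb hy)
  have hdiff : x / (s + b * x) - y / (s + b * y) = s / ((s + b * x) * (s + b * y)) * (x - y) := by
    rw [div_sub_div _ _ (hs.trans_le hxs).ne' (hs.trans_le hys).ne']
    ring
  have hcoeff : s / ((s + b * x) * (s + b * y)) ≤ s⁻¹ := by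
    rw [div_le_iff₀ (mul_pos (hs.trans_le hxs) (hs.trans_le hys)), ← div_eq_inv_mul,
      le_div_iff₀ hs]
    exact mul_le_mul hxs hys hs.le (hs.le.trans hxs)
  rw [hdiff, abs_mul, abs_of_nonneg (div_nonneg hs.le
    (mul_nonneg (hs.le.trans hxs) (hs.le.trans hys)))]
  gcongr

/-- The map applied to `u` sends `(1 + h)⁻¹` to `(1 + ((1 - t) h + t f))⁻¹`. -/
theorem exists_mem_closure_reciprocalHull_segment (hS : S ⊆ L0pos P) (hconv : Convex ℝ S)
    (hf : f ∈ S) (ht : 0 < t) (ht1 : t < 1) (hu : u ∈ closure (reciprocalHull P S)) :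
    ∃ v ∈ closure (reciprocalHull P S), ∀ᵐ ω ∂P, v ω = u ω / (1 - t + t * (1 + f ω) * u ω) := by
  have hs : 0 < 1 - t := sub_pos.2 ht1
  have hfmeas : Measurable f := (hS hf).1
  refine exists_mem_closure_reciprocalHull_comp
    (ψ := fun ω x => x / (1 - t + t * (1 + f ω) * x)) (c := Real.toNNReal (1 - t)⁻¹)
    (by unfold Function.uncurry; fun_prop) ?_ ?_ ?_ hu
  · filter_upwards [(hS hf).2] with ω hfω
    exact (lipschitzOnWith_div_add_mul hs (by positivity)).mono fun x hx => hx.1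
  · filter_upwards [(hS hf).2] with ω hfω x hx
    have hden : x ≤ 1 - t + t * (1 + f ω) * x := by
      nlinarith [hx.1, hx.2, mul_nonneg (mul_nonneg ht.le hfω) hx.1]
    exact ⟨div_nonneg hx.1 (hx.1.trans hden), div_le_one_of_le₀ hden (hx.1.trans hden)⟩
  · intro h hh
    refine ⟨(1 - t) • h + t • f, hconv hh hf hs.le ht.le (sub_add_cancel 1 t), ?_⟩
    filter_upwards [(hS hh).2, (hS hf).2] with ω hhω hfω x _ hhx
    have hx0 : 0 < x := (by positivity : (0 : ℝ) < (1 + h ω)⁻¹).trans_le hhx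
    have hx1 : 1 ≤ x * (1 + h ω) := (inv_le_iff_one_le_mul₀ (by positivity)).1 hhx
    simp only [Pi.add_apply, Pi.smul_apply, smul_eq_mul]
    rw [inv_eq_one_div, div_le_div_iff₀ (by positivity) (by positivity)]
    nlinarith

theorem cube_mul_div_le {x a : ℝ} (hx : x ∈ Set.Icc 0 1) (ha : 0 ≤ a) (ht : 0 < t) (ht1 : t < 1) :
    x ^ 3 * a / (1 - t + t * (1 + a) * x) ≤
      (1 - t)⁻¹ * (1 - x) + t⁻¹ * (x * x - x * (x / (1 - t + t * (1 + a) * x))) := by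
  obtain ⟨hx0, hx1⟩ := hx
  have hs : 0 < 1 - t := sub_pos.2 ht1
  have hden : 1 - t ≤ 1 - t + t * (1 + a) * x := le_add_of_nonneg_right (by positivity)
  calc x ^ 3 * a / (1 - t + t * (1 + a) * x)
      = (1 - t + t * (1 + a) * x)⁻¹ * (x ^ 2 * (1 - x)) +
          t⁻¹ * (x * x - x * (x / (1 - t + t * (1 + a) * x))) := by
        field_simp [(hs.trans_le hden).ne']
        ring
    _ ≤ _ := by
        gcongr
        exact mul_le_of_le_one_left (sub_nonneg.2 hx1) (pow_le_one₀ hx0 hx1)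

theorem lintegral_div_le_of_isLeastNormPoint
    (hu : IsLeastNormPoint (closure (reciprocalHull P S)) u) (hS : S ⊆ L0pos P)
    (hconv : Convex ℝ S) (hf : f ∈ S) (ht : 0 < t) (ht1 : t < 1) :
    ∫⁻ ω, ENNReal.ofReal (u ω ^ 3 * f ω / (1 - t + t * (1 + f ω) * u ω)) ∂P ≤
      ENNReal.ofReal ((1 - t)⁻¹ * ∫ ω, (1 - u ω) ∂P) := by
  obtain ⟨v, hv, hvu⟩ := exists_mem_closure_reciprocalHull_segment hS hconv hf ht ht1 hu.1
  have : 0 < 1 - t := sub_pos.2 ht1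
  have hpointwise : ∀ᵐ ω ∂P, u ω ^ 3 * f ω / (1 - t + t * (1 + f ω) * u ω) ∈
      Set.Icc 0 ((1 - t)⁻¹ * (1 - u ω) + t⁻¹ * (u ω * u ω - u ω * v ω)) := by
    filter_upwards [hvu, ae_mem_Icc_of_mem_closure_reciprocalHull hu.1, (hS hf).2]
      with ω hvω huω hfω
    have hu0 := huω.1
    exact ⟨by positivity, hvω ▸ cube_mul_div_le huω hfω ht ht1⟩
  have hsub : Integrable (fun ω => (1 - t)⁻¹ * (1 - u ω)) P :=
    ((integrable_const 1).sub ((Lp.memLp u).integrable one_le_two)).const_mul _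
  have huu : Integrable (fun ω => u ω * u ω) P := (Lp.memLp u).integrable_mul (Lp.memLp u)
  have huv : Integrable (fun ω => u ω * v ω) P := (Lp.memLp u).integrable_mul (Lp.memLp v)
  have hdiff : Integrable (fun ω => t⁻¹ * (u ω * u ω - u ω * v ω)) P := (huu.sub huv).const_mul _
  calc ∫⁻ ω, ENNReal.ofReal (u ω ^ 3 * f ω / (1 - t + t * (1 + f ω) * u ω)) ∂P
      ≤ ∫⁻ ω, ENNReal.ofReal ((1 - t)⁻¹ * (1 - u ω) + t⁻¹ * (u ω * u ω - u ω * v ω)) ∂P :=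
        lintegral_mono_ae (hpointwise.mono fun ω hω => ENNReal.ofReal_le_ofReal hω.2)
    _ = ENNReal.ofReal (∫ ω, ((1 - t)⁻¹ * (1 - u ω) + t⁻¹ * (u ω * u ω - u ω * v ω)) ∂P) :=
        (ofReal_integral_eq_lintegral_ofReal (hsub.add hdiff)
          (hpointwise.mono fun ω hω => hω.1.trans hω.2)).symm
    _ = ENNReal.ofReal ((1 - t)⁻¹ * ∫ ω, (1 - u ω) ∂P + t⁻¹ * (‖u‖ ^ 2 - inner ℝ u v)) := by
        rw [integral_add hsub hdiff, integral_const_mul, integral_const_mul,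
          integral_sub huu huv, ← real_inner_self_eq_norm_sq, inner_eq_integral_mul,
          inner_eq_integral_mul]
    _ ≤ ENNReal.ofReal ((1 - t)⁻¹ * ∫ ω, (1 - u ω) ∂P) := by
        gcongr
        exact add_le_of_nonpos_right
          (mul_nonpos_of_nonneg_of_nonpos (inv_nonneg.2 ht.le) (sub_nonpos.2 (hu.2 v hv)))

theorem lintegral_cube_mul_le_of_isLeastNormPoint
    (hu : IsLeastNormPoint (closure (reciprocalHull P S)) u) (hS : S ⊆ L0pos P)
    (hconv : Convex ℝ S) (hf : f ∈ S) :
    ∫⁻ ω, ENNReal.ofReal (u ω ^ 3 * f ω) ∂P ≤ ENNReal.ofReal (∫ ω, (1 - u ω) ∂P) := by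
  have hfmeas : Measurable f := (hS hf).1
  have humeas : Measurable u := (Lp.stronglyMeasurable u).measurable
  have hlim : ∀ ω, Tendsto (fun t : ℝ => ENNReal.ofReal
      (u ω ^ 3 * f ω / (1 - t + t * (1 + f ω) * u ω))) (𝓝[>] 0)
      (𝓝 (ENNReal.ofReal (u ω ^ 3 * f ω))) := fun ω => by
    have hcont : ContinuousAt (fun t : ℝ => u ω ^ 3 * f ω / (1 - t + t * (1 + f ω) * u ω)) 0 := by
      fun_prop (disch := norm_num)
    simpa only [sub_zero, zero_mul, add_zero, div_one] using
      ENNReal.tendsto_ofReal (hcont.tendsto.mono_left nhdsWithin_le_nhds)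
  have hbound : Tendsto (fun t : ℝ => ENNReal.ofReal ((1 - t)⁻¹ * ∫ ω, (1 - u ω) ∂P)) (𝓝[>] 0)
      (𝓝 (ENNReal.ofReal (∫ ω, (1 - u ω) ∂P))) := by
    have hcont : ContinuousAt (fun t : ℝ => (1 - t)⁻¹ * ∫ ω, (1 - u ω) ∂P) 0 := by
      fun_prop (disch := norm_num)
    simpa only [sub_zero, inv_one, one_mul] using
      ENNReal.tendsto_ofReal (hcont.tendsto.mono_left nhdsWithin_le_nhds)
  calc ∫⁻ ω, ENNReal.ofReal (u ω ^ 3 * f ω) ∂P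
      = ∫⁻ ω, liminf (fun t : ℝ => ENNReal.ofReal
          (u ω ^ 3 * f ω / (1 - t + t * (1 + f ω) * u ω))) (𝓝[>] 0) ∂P := by
        simp only [(hlim _).liminf_eq]
    _ ≤ liminf (fun t : ℝ => ∫⁻ ω, ENNReal.ofReal
          (u ω ^ 3 * f ω / (1 - t + t * (1 + f ω) * u ω)) ∂P) (𝓝[>] 0) :=
        lintegral_liminf_le fun t => by fun_prop
    _ ≤ liminf (fun t : ℝ => ENNReal.ofReal ((1 - t)⁻¹ * ∫ ω, (1 - u ω) ∂P)) (𝓝[>] 0) := by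
        refine liminf_le_liminf ?_
        filter_upwards [Ioo_mem_nhdsGT one_pos] with t ht
        exact lintegral_div_le_of_isLeastNormPoint hu hS hconv hf ht.1 ht.2
    _ = ENNReal.ofReal (∫ ω, (1 - u ω) ∂P) := hbound.liminf_eq

end Numeraire

section Limit

variable {Ω : Type*} [MeasurableSpace Ω] {P : Measure Ω} {S : ℕ → Set (Ω → ℝ)} {h : Lp ℝ 2 P}

theorem lintegral_enorm_sub_le_edist [IsProbabilityMeasure P] (u v : Lp ℝ 2 P) :
    ∫⁻ ω, ‖u ω - v ω‖ₑ ∂P ≤ edist u v := by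
  rw [Lp.edist_def]
  calc ∫⁻ ω, ‖u ω - v ω‖ₑ ∂P = eLpNorm (⇑u - ⇑v) 1 P := eLpNorm_one_eq_lintegral_enorm.symm
    _ ≤ eLpNorm (⇑u - ⇑v) 2 P := eLpNorm_le_eLpNorm_of_exponent_le one_le_two
        ((Lp.aestronglyMeasurable u).sub (Lp.aestronglyMeasurable v))

theorem exists_lintegral_le_forall_le_add [IsProbabilityMeasure P] (hS : ∀ n, S n ⊆ L0pos P)
    (hh : ∀ n, h ∈ closure (reciprocalHull P (S n))) {ε : ENNReal} (hε : ε ≠ 0) :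
    ∃ G : Ω → ENNReal, Measurable G ∧ ∫⁻ ω, G ω ∂P ≤ ε ∧
      ∀ n, ∃ f ∈ S n, ∀ᵐ ω ∂P, ENNReal.ofReal (1 - h ω) ≤ ENNReal.ofReal (f ω) + G ω := by
  obtain ⟨δ, hδ, hsum⟩ := ENNReal.exists_pos_sum_of_countable' hε ℕ
  choose u hu hdist using fun n => EMetric.mem_closure_iff.1 (hh n) (δ n) (hδ n)
  have hmeas : ∀ n, Measurable fun ω => ‖h ω - u n ω‖ₑ := fun n =>
    ((Lp.stronglyMeasurable h).sub (Lp.stronglyMeasurable (u n))).measurable.enorm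
  refine ⟨fun ω => ∑' n, ‖h ω - u n ω‖ₑ, Measurable.tsum hmeas, ?_, fun n => ?_⟩
  · rw [lintegral_tsum fun n => (hmeas n).aemeasurable]
    exact (ENNReal.tsum_le_tsum fun n =>
      (lintegral_enorm_sub_le_edist h (u n)).trans (hdist n).le).trans hsum.le
  · obtain ⟨-, f, hf, hfu⟩ := hu n
    refine ⟨f, hf, ?_⟩
    filter_upwards [hfu, (hS n hf).2] with ω hfuω hfω
    have hfinv : 1 - f ω ≤ (1 + f ω)⁻¹ := by
      rw [inv_eq_one_div, le_div_iff₀ (by positivity)]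
      nlinarith
    calc ENNReal.ofReal (1 - h ω) ≤ ENNReal.ofReal (f ω + |h ω - u n ω|) := by
          gcongr
          linarith [neg_abs_le (h ω - u n ω)]
      _ = ENNReal.ofReal (f ω) + ‖h ω - u n ω‖ₑ := by
          rw [ENNReal.ofReal_add hfω (abs_nonneg _), Real.enorm_eq_ofReal_abs]
      _ ≤ ENNReal.ofReal (f ω) + ∑' n, ‖h ω - u n ω‖ₑ := by
          gcongr
          exact ENNReal.le_tsum n

theorem eq_const_one_of_forall_mem_closure_reciprocalHull [IsProbabilityMeasure P]
    (hS : ∀ n, S n ⊆ L0pos P)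
    (hzero : ∀ Y ∈ L0pos P, (∀ n, ∃ Z ∈ S n, ∀ᵐ ω ∂P, Y ω ≤ Z ω) → ∀ᵐ ω ∂P, Y ω = 0)
    (hh : ∀ n, h ∈ closure (reciprocalHull P (S n))) : h = Lp.const 2 P 1 := by
  have hhmeas : Measurable h := (Lp.stronglyMeasurable h).measurable
  have hle : ∀ ε : ENNReal, ε ≠ 0 → ∫⁻ ω, ENNReal.ofReal (1 - h ω) ∂P ≤ ε := by
    intro ε hε
    obtain ⟨G, hG, hGε, hdom⟩ := exists_lintegral_le_forall_le_add hS hh hε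
    refine (lintegral_mono_ae ?_).trans hGε
    have hY : (fun ω => (ENNReal.ofReal (1 - h ω) - G ω).toReal) ∈ L0pos P :=
      ⟨by fun_prop, .of_forall fun ω => ENNReal.toReal_nonneg⟩
    have hYdom : ∀ n, ∃ f ∈ S n, ∀ᵐ ω ∂P, (ENNReal.ofReal (1 - h ω) - G ω).toReal ≤ f ω := by
      intro n
      obtain ⟨f, hf, hfG⟩ := hdom n
      refine ⟨f, hf, ?_⟩
      filter_upwards [hfG, (hS n hf).2] with ω hfGω hfω
      exact ENNReal.toReal_le_of_le_ofReal hfω (tsub_le_iff_right.2 hfGω)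
    filter_upwards [hzero _ hY hYdom] with ω hω
    rw [ENNReal.toReal_eq_zero_iff] at hω
    exact tsub_eq_zero_iff_le.1 (hω.resolve_right (ENNReal.sub_ne_top ENNReal.ofReal_ne_top))
  have hint : ∫⁻ ω, ENNReal.ofReal (1 - h ω) ∂P = 0 :=
    nonpos_iff_eq_zero.1 (le_of_forall_gt_imp_ge_of_dense fun ε hε => hle ε hε.ne')
  have hae := (lintegral_eq_zero_iff (by fun_prop : Measurable fun ω =>
    ENNReal.ofReal (1 - h ω))).1 hint
  have hh1 := ae_mem_Icc_of_mem_closure_reciprocalHull (hh 0)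
  refine Lp.ext ?_
  filter_upwards [hae, hh1, Lp.coeFn_const 2 P (1 : ℝ)] with ω hge hIcc hconst
  rw [hconst]
  exact le_antisymm hIcc.2 (sub_nonpos.1 (ENNReal.ofReal_eq_zero.1 hge))

theorem tendsto_isLeastNormPoint_const_one [IsProbabilityMeasure P] {u : ℕ → Lp ℝ 2 P}
    (hS : ∀ n, S n ⊆ L0pos P) (hne : ∀ n, (S n).Nonempty)
    (hanti : Antitone fun n => closure (reciprocalHull P (S n)))
    (hzero : ∀ Y ∈ L0pos P, (∀ n, ∃ Z ∈ S n, ∀ᵐ ω ∂P, Y ω ≤ Z ω) → ∀ᵐ ω ∂P, Y ω = 0)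
    (hu : ∀ n, IsLeastNormPoint (closure (reciprocalHull P (S n))) (u n)) :
    Tendsto u atTop (𝓝 (Lp.const 2 P 1)) := by
  have hbdd : BddAbove (Set.range fun n => ‖u n‖ ^ 2) := by
    refine ⟨‖Lp.const 2 P (1 : ℝ)‖ ^ 2, Set.forall_mem_range.2 fun n => ?_⟩
    gcongr
    exact (hu n).norm_le (subset_closure (const_one_mem_reciprocalHull (hS n) (hne n)))
  obtain ⟨h, hlim⟩ := cauchySeq_tendsto_of_complete (cauchySeq_of_isLeastNormPoint hanti hu hbdd)
  have hh : ∀ n, h ∈ closure (reciprocalHull P (S n)) := fun n =>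
    isClosed_closure.mem_of_tendsto hlim ((eventually_ge_atTop n).mono fun k hk =>
      hanti hk (hu k).1)
  rwa [eq_const_one_of_forall_mem_closure_reciprocalHull hS hzero hh] at hlim

theorem norm_sq_le_measureReal_ne_zero [IsFiniteMeasure P] {T T' : Set (Ω → ℝ)} {u v : Lp ℝ 2 P}
    {c : ℝ} (hc : 0 ≤ c) (hT : T ⊆ L0pos P) (hT' : T' ⊆ L0pos P) (hTT' : IsDominatedUpTo P c T T')
    (hu : u ∈ closure (reciprocalHull P T))
    (hv : IsLeastNormPoint (closure (reciprocalHull P T')) v) :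
    ‖v‖ ^ 2 ≤ P.real {ω | u ω ≠ 0} := by
  obtain ⟨w, hw, hwu⟩ := exists_mem_closure_reciprocalHull_min hc hT hT' hTT' hu
  have hmeas : MeasurableSet {ω | u ω ≠ 0} :=
    (Lp.stronglyMeasurable u).measurable (measurableSet_singleton 0).compl
  have hvw : Integrable (fun ω => v ω * w ω) P := (Lp.memLp v).integrable_mul (Lp.memLp w)
  calc ‖v‖ ^ 2 ≤ ∫ ω, v ω * w ω ∂P := inner_eq_integral_mul v w ▸ hv.2 w hw
    _ ≤ ∫ ω, {ω | u ω ≠ 0}.indicator (fun _ => 1) ω ∂P := by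
        refine integral_mono_ae hvw ((integrable_const 1).indicator hmeas) ?_
        filter_upwards [hwu, ae_mem_Icc_of_mem_closure_reciprocalHull hv.1,
          ae_mem_Icc_of_mem_closure_reciprocalHull hw] with ω hwuω hvω hwω
        by_cases hu0 : u ω = 0
        · simp [hu0, hwuω]
        · simpa [hu0] using mul_le_one₀ hvω.2 hwω.1 hwω.2
    _ = P.real {ω | u ω ≠ 0} := by rw [integral_indicator_const 1 hmeas, smul_eq_mul, mul_one]

theorem ae_pos_of_isLeastNormPoint_of_tendsto [IsProbabilityMeasure P] {u : ℕ → Lp ℝ 2 P}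
    (hS : ∀ n, S n ⊆ L0pos P)
    (hshift : ∀ m n, ∃ c, 0 ≤ c ∧ IsDominatedUpTo P c (S m) (S n))
    (hu : ∀ n, IsLeastNormPoint (closure (reciprocalHull P (S n))) (u n))
    (hlim : Tendsto u atTop (𝓝 (Lp.const 2 P 1))) (n : ℕ) : ∀ᵐ ω ∂P, 0 < u n ω := by
  have hmeas : MeasurableSet {ω | u n ω ≠ 0} :=
    (Lp.stronglyMeasurable (u n)).measurable (measurableSet_singleton 0).compl
  have hle : ∀ m, ‖u m‖ ^ 2 ≤ P.real {ω | u n ω ≠ 0} := fun m => by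
    obtain ⟨c, hc, hdom⟩ := hshift n m
    exact norm_sq_le_measureReal_ne_zero hc (hS n) (hS m) hdom (hu n).1 (hu m)
  have hone : ‖Lp.const 2 P (1 : ℝ)‖ = 1 := by
    rw [Lp.norm_const 2 P 1 two_ne_zero, probReal_univ, Real.one_rpow, mul_one, norm_one]
  have hge : 1 ≤ P.real {ω | u n ω ≠ 0} := by
    simpa only [hone, one_pow] using le_of_tendsto' (hlim.norm.pow 2) hle
  have hprob : P {ω | u n ω ≠ 0} = 1 :=
    (ENNReal.toReal_eq_one_iff _).1 (le_antisymm measureReal_le_one hge)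
  filter_upwards [(mem_ae_iff_prob_eq_one hmeas).2 hprob,
    ae_mem_Icc_of_mem_closure_reciprocalHull (hu n).1] with ω hne hIcc
  exact hIcc.1.lt_of_ne' hne

theorem tendsto_integral_one_sub [IsFiniteMeasure P] {u : ℕ → Lp ℝ 2 P}
    (hlim : Tendsto u atTop (𝓝 (Lp.const 2 P 1))) :
    Tendsto (fun n => ∫ ω, (1 - u n ω) ∂P) atTop (𝓝 0) := by
  have hinner : ∀ n, ∫ ω, (1 - u n ω) ∂P =
      inner ℝ (Lp.const 2 P (1 : ℝ)) (Lp.const 2 P (1 : ℝ) - u n) := fun n => by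
    rw [inner_eq_integral_mul]
    refine integral_congr_ae ?_
    filter_upwards [Lp.coeFn_const 2 P (1 : ℝ), Lp.coeFn_sub (Lp.const 2 P (1 : ℝ)) (u n)]
      with ω hconst hsub
    rw [hsub, Pi.sub_apply, hconst, Function.const_apply, one_mul]
  simpa only [hinner, sub_self, inner_zero_right] using
    (tendsto_const_nhds (x := Lp.const 2 P (1 : ℝ))).inner (𝕜 := ℝ)
      (hlim.const_sub (Lp.const 2 P (1 : ℝ)))

end Limit

section Density

variable {Ω : Type*} [MeasurableSpace Ω] {P : Measure Ω}

theorem exists_isProbabilityMeasure_lintegral_eq [NeZero P] {w : Ω → ENNReal} (hw : Measurable w)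
    (hw0 : ∀ᵐ ω ∂P, w ω ≠ 0) (hwint : ∫⁻ ω, w ω ∂P ≠ ⊤) :
    ∃ Q : Measure Ω, IsProbabilityMeasure Q ∧ Q ≪ P ∧ P ≪ Q ∧ ∃ C : ENNReal, C ≠ ⊤ ∧
      ∀ g : Ω → ENNReal, Measurable g → ∫⁻ ω, g ω ∂Q = C * ∫⁻ ω, w ω * g ω ∂P := by
  have hPw : P ≪ P.withDensity w := withDensity_absolutelyContinuous' hw.aemeasurable hw0
  have : IsFiniteMeasure (P.withDensity w) := isFiniteMeasure_withDensity hwint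
  have : NeZero (P.withDensity w) :=
    ⟨fun hzero => NeZero.ne P (Measure.absolutelyContinuous_zero_iff.1 (hzero ▸ hPw))⟩
  have huniv : P.withDensity w Set.univ ≠ 0 := NeZero.ne _
  refine ⟨(P.withDensity w Set.univ)⁻¹ • P.withDensity w, isProbabilityMeasureSMul,
    (withDensity_absolutelyContinuous P w).smul_left _,
    hPw.trans (Measure.absolutelyContinuous_smul (ENNReal.inv_ne_zero.2 (measure_ne_top _ _))),
    (P.withDensity w Set.univ)⁻¹, ENNReal.inv_ne_top.2 huniv, fun g hg => ?_⟩
  rw [lintegral_smul_measure, smul_eq_mul, lintegral_withDensity_eq_lintegral_mul P hw hg]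
  rfl

theorem iInf_ofReal_ne_zero_of_tendsto {x : ℕ → ℝ} (hpos : ∀ n, 0 < x n) {a : ℝ} (ha : 0 < a)
    (hx : Tendsto x atTop (𝓝 a)) : ⨅ n, ENNReal.ofReal (x n) ≠ 0 := by
  obtain ⟨B, hB⟩ := (hx.inv₀ ha.ne').bddAbove_range
  have hB0 : 0 < B := (inv_pos.2 (hpos 0)).trans_le (hB ⟨0, rfl⟩)
  refine ((ENNReal.ofReal_pos.2 (inv_pos.2 hB0)).trans_le (le_iInf fun n => ?_)).ne'
  gcongr
  exact inv_le_of_inv_le₀ (hpos n) (hB ⟨n, rfl⟩)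

theorem exists_isProbabilityMeasure_forall_lintegral_le [IsFiniteMeasure P] [NeZero P]
    {w : ℕ → Ω → ℝ} (hw : ∀ n, Measurable (w n)) (hpos : ∀ᵐ ω ∂P, ∀ n, 0 < w n ω)
    (hlim : ∀ᵐ ω ∂P, Tendsto (fun n => w n ω) atTop (𝓝 1)) :
    ∃ Q : Measure Ω, IsProbabilityMeasure Q ∧ Q ≪ P ∧ P ≪ Q ∧ ∃ C : ENNReal, C ≠ ⊤ ∧
      ∀ n, ∀ f : Ω → ℝ, Measurable f →
        ∫⁻ ω, ENNReal.ofReal (f ω) ∂Q ≤ C * ∫⁻ ω, ENNReal.ofReal (w n ω * f ω) ∂P := by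
  obtain ⟨Q, hQprob, hQP, hPQ, C, hC, hQ⟩ := exists_isProbabilityMeasure_lintegral_eq (P := P)
    (w := fun ω => min 1 (⨅ n, ENNReal.ofReal (w n ω))) (by fun_prop)
    (by
      filter_upwards [hpos, hlim] with ω hposω hlimω
      rw [← pos_iff_ne_zero, lt_min_iff, pos_iff_ne_zero, pos_iff_ne_zero]
      exact ⟨one_ne_zero, iInf_ofReal_ne_zero_of_tendsto hposω one_pos hlimω⟩)
    (ne_top_of_le_ne_top (lintegral_const_lt_top (μ := P) ENNReal.one_ne_top).ne
      (lintegral_mono fun ω => min_le_left _ _))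
  refine ⟨Q, hQprob, hQP, hPQ, C, hC, fun n f hf => ?_⟩
  rw [hQ _ hf.ennreal_ofReal]
  gcongr C * ?_
  refine lintegral_mono_ae ?_
  filter_upwards [hpos] with ω hposω
  rw [ENNReal.ofReal_mul (hposω n).le]
  gcongr
  exact (min_le_right _ _).trans (iInf_le _ n)

theorem IsDominatedUpTo.iSup_lintegral_ofReal_le {Q : Measure Ω} {S T : Set (Ω → ℝ)} (hQP : Q ≪ P)
    (hST : IsDominatedUpTo P 0 S T) :
    ⨆ f ∈ S, ∫⁻ ω, ENNReal.ofReal (f ω) ∂Q ≤ ⨆ f ∈ T, ∫⁻ ω, ENNReal.ofReal (f ω) ∂Q := by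
  refine iSup₂_le fun f hf => ?_
  obtain ⟨g, hg, hfg⟩ := hST f hf
  refine le_iSup₂_of_le g hg (lintegral_mono_ae ?_)
  filter_upwards [hQP.ae_le hfg] with ω hω
  exact ENNReal.ofReal_le_ofReal (hω.trans_eq (zero_add _))

theorem exists_isProbabilityMeasure_tendsto_iSup_lintegral [IsProbabilityMeasure P]
    {S : ℕ → Set (Ω → ℝ)} (hS : ∀ n, S n ⊆ L0pos P)
    (hconv : ∀ n, Convex ℝ (S n)) (hne : ∀ n, (S n).Nonempty)
    (hanti : ∀ m n, m ≤ n → IsDominatedUpTo P 0 (S n) (S m))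
    (hshift : ∀ m n, ∃ c, 0 ≤ c ∧ IsDominatedUpTo P c (S m) (S n))
    (hzero : ∀ Y ∈ L0pos P, (∀ n, ∃ Z ∈ S n, ∀ᵐ ω ∂P, Y ω ≤ Z ω) → ∀ᵐ ω ∂P, Y ω = 0) :
    ∃ Q : Measure Ω, IsProbabilityMeasure Q ∧ Q ≪ P ∧ P ≪ Q ∧
      Tendsto (fun n => ⨆ f ∈ S n, ∫⁻ ω, ENNReal.ofReal (f ω) ∂Q) atTop (𝓝 0) := by
  have hK : ∀ n, ∃ v, IsLeastNormPoint (closure (reciprocalHull P (S n))) v := fun n =>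
    exists_isLeastNormPoint (convex_reciprocalHull (hS n) (hconv n)).closure
      isClosed_closure.isComplete ⟨_, subset_closure (const_one_mem_reciprocalHull (hS n) (hne n))⟩
  choose u hu using hK
  have hlim : Tendsto u atTop (𝓝 (Lp.const 2 P 1)) :=
    tendsto_isLeastNormPoint_const_one hS hne
      (fun m n hmn => closure_reciprocalHull_subset (hS n) (hS m) (hanti m n hmn)) hzero hu
  have hpos : ∀ᵐ ω ∂P, ∀ n, 0 < u n ω :=
    ae_all_iff.2 (ae_pos_of_isLeastNormPoint_of_tendsto hS hshift hu hlim)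
  obtain ⟨φ, hφ, hae⟩ := (tendstoInMeasure_of_tendsto_Lp hlim).exists_seq_tendsto_ae
  obtain ⟨Q, hQprob, hQP, hPQ, C, hC, hQ⟩ := exists_isProbabilityMeasure_forall_lintegral_le
    (w := fun k ω => u (φ k) ω ^ 3)
    (fun k => (Lp.stronglyMeasurable (u (φ k))).measurable.pow_const 3)
    (hpos.mono fun ω hω k => pow_pos (hω (φ k)) 3) (by
      filter_upwards [hae, Lp.coeFn_const 2 P (1 : ℝ)] with ω hω hconst
      simpa only [hconst, Function.const_apply, one_pow] using hω.pow 3)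
  have hmono : Antitone fun n => ⨆ f ∈ S n, ∫⁻ ω, ENNReal.ofReal (f ω) ∂Q := fun m n hmn =>
    (hanti m n hmn).iSup_lintegral_ofReal_le hQP
  have hbound : ∀ k, ⨆ f ∈ S (φ k), ∫⁻ ω, ENNReal.ofReal (f ω) ∂Q ≤
      C * ENNReal.ofReal (∫ ω, (1 - u (φ k) ω) ∂P) := fun k => iSup₂_le fun f hf => by
    refine (hQ k f (hS _ hf).1).trans ?_
    gcongr
    exact lintegral_cube_mul_le_of_isLeastNormPoint (hu _) (hS _) (hconv _) hf
  have hto0 : Tendsto (fun k => C * ENNReal.ofReal (∫ ω, (1 - u (φ k) ω) ∂P)) atTop (𝓝 0) := by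
    simpa only [Function.comp_def, ENNReal.ofReal_zero, mul_zero] using ENNReal.Tendsto.const_mul
      (ENNReal.tendsto_ofReal ((tendsto_integral_one_sub hlim).comp hφ.tendsto_atTop)) (.inr hC)
  have hsub : Tendsto (fun k => ⨆ f ∈ S (φ k), ∫⁻ ω, ENNReal.ofReal (f ω) ∂Q) atTop (𝓝 0) :=
    tendsto_of_tendsto_of_tendsto_of_le_of_le tendsto_const_nhds hto0 (fun _ => zero_le) hbound
  have hinf := tendsto_atTop_iInf hmono
  rw [tendsto_nhds_unique (hinf.comp hφ.tendsto_atTop) hsub] at hinf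
  exact ⟨Q, hQprob, hQP, hPQ, hinf⟩

end Density

section ConvexHull

variable {Ω : Type*} [MeasurableSpace Ω] {P Q : Measure Ω} {S T : Set (Ω → ℝ)} {Y : Ω → ℝ}

theorem convex_L0pos : Convex ℝ (L0pos P) := by
  rintro f ⟨hf, hf0⟩ g ⟨hg, hg0⟩ a b ha hb -
  refine ⟨(hf.const_smul a).add (hg.const_smul b), ?_⟩
  filter_upwards [hf0, hg0] with ω hfω hgω
  exact add_nonneg (mul_nonneg ha hfω) (mul_nonneg hb hgω)

theorem IsDominatedUpTo.convexHull {c : ℝ} (hST : IsDominatedUpTo P c S T) :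
    IsDominatedUpTo P c (convexHull ℝ S) (convexHull ℝ T) := by
  have hconv : Convex ℝ {f : Ω → ℝ | ∃ g ∈ _root_.convexHull ℝ T, ∀ᵐ ω ∂P, f ω ≤ c + g ω} := by
    rintro f ⟨f', hf', hff'⟩ g ⟨g', hg', hgg'⟩ a b ha hb hab
    refine ⟨a • f' + b • g', convex_convexHull ℝ T hf' hg' ha hb hab, ?_⟩
    filter_upwards [hff', hgg'] with ω hfω hgω
    calc a * f ω + b * g ω ≤ a * (c + f' ω) + b * (c + g' ω) := by gcongr
      _ = (a + b) * c + (a * f' ω + b * g' ω) := by ring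
      _ = c + (a * f' ω + b * g' ω) := by rw [hab, one_mul]
  refine convexHull_min (fun f hf => ?_) hconv
  obtain ⟨g, hg, hfg⟩ := hST f hf
  exact ⟨g, subset_convexHull ℝ T hg, hfg⟩

theorem convex_setOf_lintegral_ofReal_le (μ : Measure Ω) (a : ENNReal) :
    Convex ℝ {f : Ω → ℝ | Measurable f ∧ ∫⁻ ω, ENNReal.ofReal (f ω) ∂μ ≤ a} := by
  rintro f ⟨hf, hfa⟩ g ⟨hg, hga⟩ s t hs ht hst
  refine ⟨(hf.const_smul s).add (hg.const_smul t), ?_⟩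
  calc ∫⁻ ω, ENNReal.ofReal ((s • f + t • g) ω) ∂μ
      ≤ ∫⁻ ω, (ENNReal.ofReal s * ENNReal.ofReal (f ω) +
          ENNReal.ofReal t * ENNReal.ofReal (g ω)) ∂μ := by
        refine lintegral_mono fun ω => ?_
        rw [← ENNReal.ofReal_mul hs, ← ENNReal.ofReal_mul ht]
        exact ENNReal.ofReal_add_le
    _ = ENNReal.ofReal s * ∫⁻ ω, ENNReal.ofReal (f ω) ∂μ +
          ENNReal.ofReal t * ∫⁻ ω, ENNReal.ofReal (g ω) ∂μ := by
        rw [lintegral_add_left (hf.ennreal_ofReal.const_mul _),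
          lintegral_const_mul' _ _ ENNReal.ofReal_ne_top,
          lintegral_const_mul' _ _ ENNReal.ofReal_ne_top]
    _ ≤ ENNReal.ofReal s * a + ENNReal.ofReal t * a := by gcongr
    _ = a := by rw [← add_mul, ← ENNReal.ofReal_add hs ht, hst, ENNReal.ofReal_one, one_mul]

theorem lintegral_ofReal_le_iSup_of_mem_scSet (hQP : Q ≪ P) (hS : ∀ f ∈ S, Measurable f)
    (hY : Y ∈ scSet P S) :
    ∫⁻ ω, ENNReal.ofReal (Y ω) ∂Q ≤ ⨆ f ∈ S, ∫⁻ ω, ENNReal.ofReal (f ω) ∂Q := by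
  obtain ⟨-, Z, hZ, hYZ⟩ := hY
  have hsub : convexHull ℝ S ⊆ {f | Measurable f ∧
      ∫⁻ ω, ENNReal.ofReal (f ω) ∂Q ≤ ⨆ f ∈ S, ∫⁻ ω, ENNReal.ofReal (f ω) ∂Q} :=
    convexHull_min (fun f hf => ⟨hS f hf, le_iSup₂_of_le f hf le_rfl⟩)
      (convex_setOf_lintegral_ofReal_le Q _)
  refine (lintegral_mono_ae ?_).trans (hsub hZ).2
  filter_upwards [hQP.ae_le hYZ] with ω hω using ENNReal.ofReal_le_ofReal hω

theorem ae_eq_zero_of_forall_mem_scSet {S : ℕ → Set (Ω → ℝ)} (hQP : Q ≪ P) (hPQ : P ≪ Q)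
    (hS : ∀ n, ∀ f ∈ S n, Measurable f)
    (hlim : Tendsto (fun n => ⨆ f ∈ S n, ∫⁻ ω, ENNReal.ofReal (f ω) ∂Q) atTop (𝓝 0))
    (hY : ∀ n, Y ∈ scSet P (S n)) : ∀ᵐ ω ∂P, Y ω = 0 := by
  obtain ⟨hYmeas, hYnonneg⟩ := (hY 0).1
  have hint : ∫⁻ ω, ENNReal.ofReal (Y ω) ∂Q = 0 := nonpos_iff_eq_zero.1
    (ge_of_tendsto' hlim fun n => lintegral_ofReal_le_iSup_of_mem_scSet hQP (hS n) (hY n))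
  filter_upwards [hPQ.ae_le ((lintegral_eq_zero_iff hYmeas.ennreal_ofReal).1 hint), hYnonneg]
    with ω hω hω0
  exact le_antisymm (ENNReal.ofReal_eq_zero.1 hω) hω0

end ConvexHull

section AbsExcess

variable {Ω : Type*} {𝒳 : Set (Ω → ℝ)}

/-- The excesses `(|X| - n)₊` for `X ∈ 𝒳`, so that `OsetAbs P 𝒳 n = scSet P (absExcess 𝒳 n)`
holds definitionally. -/
def absExcess (𝒳 : Set (Ω → ℝ)) (n : ℕ) : Set (Ω → ℝ) :=
  {f | ∃ X ∈ 𝒳, f = fun ω => max (|X ω| - n) 0}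

variable [MeasurableSpace Ω]

theorem absExcess_subset_L0pos {P : Measure Ω} (hmeas : ∀ X ∈ 𝒳, Measurable X) (n : ℕ) :
    absExcess 𝒳 n ⊆ L0pos P := by
  rintro _ ⟨X, hX, rfl⟩
  exact ⟨((hmeas X hX).norm.sub_const _).max measurable_const,
    .of_forall fun ω => le_max_right _ _⟩

theorem isDominatedUpTo_absExcess {P : Measure Ω} {c : ℝ} {m n : ℕ} (hc : 0 ≤ c)
    (hmn : (n : ℝ) ≤ c + m) : IsDominatedUpTo P c (absExcess 𝒳 m) (absExcess 𝒳 n) := by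
  rintro _ ⟨X, hX, rfl⟩
  refine ⟨_, ⟨X, hX, rfl⟩, .of_forall fun ω => max_le ?_ ?_⟩
  · linarith [le_max_left (|X ω| - n) 0]
  · linarith [le_max_right (|X ω| - n) 0]

theorem lintegral_excess_le_setLIntegral (Q : Measure Ω) {X : Ω → ℝ} (hX : Measurable X) (n : ℕ) :
    ∫⁻ ω, ENNReal.ofReal (max (|X ω| - n) 0) ∂Q ≤
      ∫⁻ ω in {ω | (n : ℝ) < |X ω|}, ENNReal.ofReal |X ω| ∂Q := by
  have hs : MeasurableSet {ω | (n : ℝ) < |X ω|} := measurableSet_lt measurable_const hX.norm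
  rw [← lintegral_indicator hs]
  refine lintegral_mono fun ω => ?_
  by_cases hω : (n : ℝ) < |X ω|
  · rw [Set.indicator_of_mem (show ω ∈ {ω | (n : ℝ) < |X ω|} from hω)]
    gcongr
    exact max_le (sub_le_self _ n.cast_nonneg) (abs_nonneg _)
  · rw [max_eq_right (by linarith), ENNReal.ofReal_zero]
    exact zero_le

theorem setLIntegral_le_two_mul_lintegral_excess (Q : Measure Ω) {X : Ω → ℝ} (hX : Measurable X)
    (n : ℕ) : ∫⁻ ω in {ω | (n : ℝ) < |X ω|}, ENNReal.ofReal |X ω| ∂Q ≤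
      2 * ∫⁻ ω, ENNReal.ofReal (max (|X ω| - (n / 2 : ℕ)) 0) ∂Q := by
  rw [← lintegral_const_mul' _ _ ENNReal.ofNat_ne_top]
  refine (setLIntegral_mono' (measurableSet_lt measurable_const hX.norm) fun ω hω => ?_).trans
    (setLIntegral_le_lintegral _ _)
  rw [← ENNReal.ofReal_ofNat 2, ← ENNReal.ofReal_mul zero_le_two]
  gcongr
  have hω : (n : ℝ) < |X ω| := hω
  have hhalf : ((n / 2 : ℕ) : ℝ) ≤ n / 2 := Nat.cast_div_le
  linarith [le_max_left (|X ω| - (n / 2 : ℕ)) 0]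

theorem unifIntAbs_iff_tendsto_absExcess {Q : Measure Ω} (hmeas : ∀ X ∈ 𝒳, Measurable X) :
    UnifIntAbs Q 𝒳 ↔
      Tendsto (fun n => ⨆ f ∈ absExcess 𝒳 n, ∫⁻ ω, ENNReal.ofReal (f ω) ∂Q) atTop (𝓝 0) := by
  refine ⟨fun h => ?_, fun h => ?_⟩
  · refine tendsto_of_tendsto_of_tendsto_of_le_of_le tendsto_const_nhds h (fun _ => zero_le)
      fun n => iSup₂_le ?_
    rintro _ ⟨X, hX, rfl⟩
    exact le_iSup₂_of_le X hX (lintegral_excess_le_setLIntegral Q (hmeas X hX) n)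
  · have hhalf := ENNReal.Tendsto.const_mul (a := 2)
      (h.comp (Nat.tendsto_div_const_atTop two_ne_zero)) (.inr ENNReal.ofNat_ne_top)
    rw [mul_zero] at hhalf
    refine tendsto_of_tendsto_of_tendsto_of_le_of_le tendsto_const_nhds hhalf (fun _ => zero_le)
      fun n => iSup₂_le fun X hX => ?_
    refine (setLIntegral_le_two_mul_lintegral_excess Q (hmeas X hX) n).trans ?_
    gcongr
    exact le_iSup₂_of_le _ ⟨X, hX, rfl⟩ le_rfl

end AbsExcess

/-- For an arbitrary `𝒳 ⊆ L⁰`, `⋂ₙ Oₙ = {0}` iff `𝒳` is uniformly `Q`-integrable for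
some probability `Q ~ P`. -/
theorem stmt_6 {Ω : Type*} [MeasurableSpace Ω] (P : Measure Ω) [IsProbabilityMeasure P]
    (𝒳 : Set (Ω → ℝ)) (hmeas : ∀ X ∈ 𝒳, Measurable X) :
    (∀ Y : Ω → ℝ, (∀ n : ℕ, Y ∈ OsetAbs P 𝒳 n) → ∀ᵐ ω ∂P, Y ω = 0) ↔
    (∃ Q : Measure Ω, IsProbabilityMeasure Q ∧ Q ≪ P ∧ P ≪ Q ∧ UnifIntAbs Q 𝒳) := by
  constructor
  · intro hzero
    rcases 𝒳.eq_empty_or_nonempty with rfl | ⟨X, hX⟩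
    · exact ⟨P, inferInstance, .rfl, .rfl, by simp [UnifIntAbs]⟩
    obtain ⟨Q, hQ, hQP, hPQ, hlim⟩ := exists_isProbabilityMeasure_tendsto_iSup_lintegral
      (S := fun n => convexHull ℝ (absExcess 𝒳 n))
      (fun n => convexHull_min (absExcess_subset_L0pos hmeas n) convex_L0pos)
      (fun n => convex_convexHull ℝ _)
      (fun n => ⟨_, subset_convexHull ℝ _ ⟨X, hX, rfl⟩⟩)
      (fun m n hmn => (isDominatedUpTo_absExcess le_rfl
        (by rw [zero_add]; exact Nat.cast_le.2 hmn)).convexHull)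
      (fun m n => ⟨n, n.cast_nonneg, (isDominatedUpTo_absExcess n.cast_nonneg
        (le_add_of_nonneg_right m.cast_nonneg)).convexHull⟩)
      (fun Y hY hdom => hzero Y fun n => ⟨hY, hdom n⟩)
    refine ⟨Q, hQ, hQP, hPQ, (unifIntAbs_iff_tendsto_absExcess hmeas).2 ?_⟩
    exact tendsto_of_tendsto_of_tendsto_of_le_of_le tendsto_const_nhds hlim (fun _ => zero_le)
      fun n => biSup_mono (subset_convexHull ℝ _)
  · rintro ⟨Q, -, hQP, hPQ, hUI⟩ Y hY
    exact ae_eq_zero_of_forall_mem_scSet hQP hPQ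
      (fun n f hf => (absExcess_subset_L0pos (P := P) hmeas n hf).1)
      ((unifIntAbs_iff_tendsto_absExcess hmeas).1 hUI) hY
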